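/- arXiv:2405.17810 — 2 statements merged into one kernel-verified Lean document; each statement's English description precedes it below -/
import Mathlib

section
/- Under hypotheses H(M), H(F), H(G), H(γ), H(Ψ), E ∈ X* and the smallness condition c_F > c_G‖γ‖^p, for every pair of parameters (z, ξ) ∈ K × Y* the solution set S(z,ξ) of Problem 2 is nonempty (and its elements belong to W). Moreover, if F is strictly monotone (⟨F(u) − F(v), u − v⟩_X > 0 whenever u ≠ v), then S(z,ξ) is a singleton. -/
open Filter Topology Bornology Set

noncomputable section

/-- Weak convergence of a sequence in a normed space: convergence tested
against every continuous linear functional. -/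
def WeakConv {V : Type*} [NormedAddCommGroup V] [NormedSpace ℝ V]
    (x : ℕ → V) (x₀ : V) : Prop :=
  ∀ f : V →L[ℝ] ℝ, Tendsto (fun n => f (x n)) atTop (𝓝 (f x₀))

/-- Weak-star convergence of a sequence of continuous linear functionals
(which coincides with weak convergence when the underlying space is reflexive). -/
def WeakStarConv {V : Type*} [NormedAddCommGroup V] [NormedSpace ℝ V]
    (f : ℕ → V →L[ℝ] ℝ) (f₀ : V →L[ℝ] ℝ) : Prop :=
  ∀ v : V, Tendsto (fun n => f n v) atTop (𝓝 (f₀ v))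

/-- Reflexivity of a real normed space, expressed via surjectivity of the
canonical embedding into the double dual. -/
def IsReflexiveSpace (V : Type*) [NormedAddCommGroup V] [NormedSpace ℝ V] : Prop :=
  Function.Surjective ⇑(NormedSpace.inclusionInDoubleDual ℝ V)

/-- Clarke generalized directional derivative of `J` at `u` in direction `v`. -/
def clarkeDD {V : Type*} [NormedAddCommGroup V] [NormedSpace ℝ V]
    (J : V → ℝ) (u v : V) : ℝ :=
  limsup (fun q : V × ℝ => (J (q.1 + q.2 • v) - J q.1) / q.2)
    ((𝓝 u) ×ˢ (𝓝[>] (0 : ℝ)))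

/-- Clarke generalized subdifferential of `J` at `u`. -/
def clarkeSub {V : Type*} [NormedAddCommGroup V] [NormedSpace ℝ V]
    (J : V → ℝ) (u : V) : Set (V →L[ℝ] ℝ) :=
  {g | ∀ v : V, g v ≤ clarkeDD J u v}

/-- The data of the evolution multivalued quasi-variational inequality:
spaces `X`, `Y`, the (unbounded) operator `L` with domain `DL`, the constraint
set `K`, the constraint map `M`, the operator `F`, the multivalued map `G`,
the trace operator `gam`, the bifunction `Psi`, the right-hand side `E`, and
the constants appearing in the hypotheses. -/
structure QVISetting (X Y : Type*) [NormedAddCommGroup X] [NormedSpace ℝ X]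
    [NormedAddCommGroup Y] [NormedSpace ℝ Y] where
  DL : Set X
  L : X → X →L[ℝ] ℝ
  K : Set X
  M : X → Set X
  F : X → X →L[ℝ] ℝ
  G : Y → Set (Y →L[ℝ] ℝ)
  gam : X →L[ℝ] Y
  Psi : X → X → ℝ
  E : X →L[ℝ] ℝ
  p : ℝ
  cF : ℝ
  dF : ℝ
  cG : ℝ
  dG : ℝ
  cPsi : ℝ
  dPsi : ℝ
  ePsi : ℝ
  beta : ℝ

namespace QVISetting

variable {X Y : Type*} [NormedAddCommGroup X] [NormedSpace ℝ X]
  [NormedAddCommGroup Y] [NormedSpace ℝ Y] (S : QVISetting X Y)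

/-- Weak convergence in `W = D(L)` equipped with the graph norm:
weak convergence in `X` together with weak convergence of `L xₙ` in `X*`. -/
def WConvW (x : ℕ → X) (x₀ : X) : Prop :=
  WeakConv x x₀ ∧ WeakStarConv (fun n => S.L (x n)) (S.L x₀)

/-- H(L): `L` is linear on its domain `DL`, densely defined, monotone, and
maximal monotone. -/
def HL : Prop :=
  (0 : X) ∈ S.DL ∧
  (∀ a ∈ S.DL, ∀ b ∈ S.DL, ∀ s t : ℝ,
      s • a + t • b ∈ S.DL ∧ S.L (s • a + t • b) = s • S.L a + t • S.L b) ∧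
  Dense S.DL ∧
  (∀ u ∈ S.DL, ∀ v ∈ S.DL, 0 ≤ (S.L u - S.L v) (u - v)) ∧
  (∀ (x : X) (xs : X →L[ℝ] ℝ),
      (∀ v ∈ S.DL, 0 ≤ (xs - S.L v) (x - v)) → x ∈ S.DL ∧ xs = S.L x)

/-- H(K): `K` is nonempty, closed and convex. -/
def HK : Prop := S.K.Nonempty ∧ IsClosed S.K ∧ Convex ℝ S.K

/-- H(M): `M` has nonempty closed convex values contained in `K`; `0` lies in
the norm-interior of `⋂_{w ∈ K} M w`; `M` has a weakly closed graph with
respect to `L`; and the Mosco-type approximation property holds. -/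
def HM : Prop :=
  (∀ z ∈ S.K, (S.M z).Nonempty ∧ IsClosed (S.M z) ∧ Convex ℝ (S.M z) ∧ S.M z ⊆ S.K) ∧
  (0 : X) ∈ interior (⋂ w ∈ S.K, S.M w) ∧
  (∀ (y x : ℕ → X) (y₀ x₀ : X), (∀ n, y n ∈ S.K) →
      (∀ n, x n ∈ S.M (y n) ∩ S.DL) →
      S.WConvW y y₀ → S.WConvW x x₀ → x₀ ∈ S.M y₀ ∩ S.DL) ∧
  (∀ (y : ℕ → X) (y₀ : X), (∀ n, y n ∈ S.K) → S.WConvW y y₀ →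
      ∀ x₀ ∈ S.M y₀ ∩ S.DL, ∃ x : ℕ → X,
        (∀ n, x n ∈ S.M (y n) ∩ S.DL) ∧ Tendsto x atTop (𝓝 x₀))

/-- H(F): `F` is bounded, monotone, hemicontinuous and `p`-coercive. -/
def HF : Prop :=
  (∀ B : Set X, IsBounded B → IsBounded (S.F '' B)) ∧
  (∀ u v : X, 0 ≤ (S.F u - S.F v) (u - v)) ∧
  (∀ u v w : X, Tendsto (fun t : ℝ => S.F (u + t • v) w) (𝓝 0) (𝓝 (S.F u w))) ∧
  1 < S.p ∧ 0 < S.cF ∧ 0 ≤ S.dF ∧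
  (∀ x : X, S.cF * ‖x‖ ^ S.p - S.dF ≤ S.F x x)

/-- H(G): `G` has nonempty closed convex values, sequentially strongly–weakly
closed graph, and satisfies the `(p-1)`-growth condition. -/
def HG : Prop :=
  (∀ z : Y, (S.G z).Nonempty ∧ IsClosed (S.G z) ∧ Convex ℝ (S.G z)) ∧
  (∀ (z : ℕ → Y) (z₀ : Y) (ξ : ℕ → Y →L[ℝ] ℝ) (ξ₀ : Y →L[ℝ] ℝ),
      Tendsto z atTop (𝓝 z₀) → (∀ n, ξ n ∈ S.G (z n)) →
      WeakStarConv ξ ξ₀ → ξ₀ ∈ S.G z₀) ∧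
  0 ≤ S.cG ∧ 0 ≤ S.dG ∧
  (∀ z : Y, ∀ ξ ∈ S.G z, ‖ξ‖ ≤ S.cG * ‖z‖ ^ (S.p - 1) + S.dG)

/-- H(γ): `gam` is compact on `W`: it maps weakly convergent sequences in `W`
to strongly convergent sequences in `Y`. -/
def Hgam : Prop :=
  ∀ (x : ℕ → X) (x₀ : X), S.WConvW x x₀ →
    Tendsto (fun n => S.gam (x n)) atTop (𝓝 (S.gam x₀))

/-- H(Ψ): conditions (i)–(iv) on the bifunction `Psi`. -/
def HPsi : Prop :=
  (∀ x : X, ConvexOn ℝ Set.univ (S.Psi x) ∧ LowerSemicontinuous (S.Psi x)) ∧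
  (∃ (η : ℝ) (b : X → X → X → ℝ), 0 < η ∧ η < S.p ∧
    (∀ a u v : X, 0 ≤ b a u v) ∧
    (∀ A B C : Set X, IsBounded A → IsBounded B → IsBounded C →
        ∃ Cb : ℝ, ∀ a ∈ A, ∀ u ∈ B, ∀ v ∈ C, b a u v ≤ Cb) ∧
    (∀ x y₁ y₂ : X, S.Psi x y₁ - S.Psi x y₂ ≤ b x y₁ y₂ * ‖y₁ - y₂‖ ^ η) ∧
    (∀ B : Set X, IsBounded B → ∀ ε > (0 : ℝ), ∃ R : ℝ, ∀ z ∈ B, ∀ x : X,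
        R ≤ ‖x‖ → b z 0 x / ‖x‖ ^ (S.p - η) ≤ ε)) ∧
  (∀ (w x y : ℕ → X) (w₀ x₀ y₀ : X),
      S.WConvW w w₀ → S.WConvW x x₀ → Tendsto y atTop (𝓝 y₀) →
      limsup (fun n => S.Psi (w n) (y n) - S.Psi (w n) (x n)) atTop ≤
        S.Psi w₀ y₀ - S.Psi w₀ x₀) ∧
  (∀ v : X, ∃ g : X →L[ℝ] ℝ, ∀ y : X, S.Psi v 0 + g y ≤ S.Psi v y) ∧
  (0 ≤ S.ePsi ∧ ∀ v : X, |S.Psi v 0| ≤ S.ePsi) ∧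
  (0 ≤ S.cPsi ∧ 0 ≤ S.dPsi ∧ 1 ≤ S.beta ∧ S.beta < S.p ∧
    ∀ v y : X, -S.cPsi * ‖y‖ ^ S.beta - S.dPsi ≤ S.Psi v y)

/-- The `(S₊)`-property of `F` with respect to `L`. -/
def SPlus : Prop :=
  ∀ (x : ℕ → X) (x₀ : X), S.WConvW x x₀ →
    limsup (fun n => S.F (x n) (x n - x₀)) atTop ≤ 0 →
    Tendsto x atTop (𝓝 x₀)

/-- Strict monotonicity of `F`. -/
def StrictlyMonotoneF : Prop :=
  ∀ u v : X, u ≠ v → 0 < (S.F u - S.F v) (u - v)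

/-- Solution set of Problem 1. -/
def Sol1 : Set X :=
  {x | x ∈ S.M x ∩ S.DL ∧ ∃ ξ ∈ S.G (S.gam x), ∀ y ∈ S.M x ∩ S.DL,
      S.Psi x x - S.Psi x y ≤
        S.L x (y - x) + S.F x (y - x) - S.E (y - x) + ξ (S.gam (y - x))}

/-- Solution set of Problem 2 with parameters `(z, ξ)`. -/
def Sol2 (z : X) (ξ : Y →L[ℝ] ℝ) : Set X :=
  {x | x ∈ S.M z ∩ S.DL ∧ ∀ y ∈ S.M z ∩ S.DL,
      S.Psi z x - S.Psi z y ≤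
        S.L x (y - x) + S.F x (y - x) - S.E (y - x) + ξ (S.gam (y - x))}

/-- Solution set of Problem 3 (with `G = ∂_C J ∘ γ`). -/
def Sol3 (J : Y → ℝ) : Set X :=
  {x | x ∈ S.M x ∩ S.DL ∧ ∃ ξ ∈ clarkeSub J (S.gam x), ∀ y ∈ S.M x ∩ S.DL,
      S.Psi x x - S.Psi x y ≤
        S.L x (y - x) + S.F x (y - x) - S.E (y - x) + ξ (S.gam (y - x))}

/-- Solution set of Problem 4 (quasi-variational–hemivariational inequality). -/
def Sol4 (J : Y → ℝ) : Set X :=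
  {x | x ∈ S.M x ∩ S.DL ∧ ∀ y ∈ S.M x ∩ S.DL,
      S.Psi x x - S.Psi x y ≤
        S.L x (y - x) + S.F x (y - x) - S.E (y - x) +
          clarkeDD J (S.gam x) (S.gam (y - x))}

/-- Solution set of Problem 5 with a real-valued convex function `Φ`
independent of the first variable. -/
def Sol5 (Φ : X → ℝ) : Set X :=
  {x | x ∈ S.M x ∩ S.DL ∧ ∃ ξ ∈ S.G (S.gam x), ∀ y ∈ S.M x ∩ S.DL,
      Φ x - Φ y ≤
        S.L x (y - x) + S.F x (y - x) - S.E (y - x) + ξ (S.gam (y - x))}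

/-- Solution set of Problem 5 with an extended-real-valued function `Φ`. -/
def Sol5E (Φ : X → EReal) : Set X :=
  {x | x ∈ S.M x ∩ S.DL ∧ ∃ ξ ∈ S.G (S.gam x), ∀ y ∈ S.M x ∩ S.DL,
      Φ x ≤
        ((S.L x (y - x) + S.F x (y - x) - S.E (y - x) + ξ (S.gam (y - x)) : ℝ) : EReal)
          + Φ y}

/-- Sequential weak compactness of a set in `W`. -/
def SeqWeakCompactW (A : Set X) : Prop :=
  ∀ x : ℕ → X, (∀ n, x n ∈ A) →
    ∃ x₀ ∈ A, ∃ φ : ℕ → ℕ, StrictMono φ ∧ S.WConvW (x ∘ φ) x₀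

end QVISetting

/-!
Problem 2 is a variational inequality for the monotone operator `L + F` with the convex potential
`Φ = Ψ(z, ·) - E + ξ ∘ γ`, which is continuous by Baire's theorem. On the intersection of `M z` with
a ball, its Minty form `Φ x - Φ v ≤ ⟨L v + F v, v - x⟩` has a solution `x`: for finitely many test
points `v` this is von Neumann's minimax theorem for a matrix game, and weak compactness does the
rest. A priori `x` need not lie in `D(L)`. But if `r` bounds `F` there, then adding `r ‖· - x‖` to
the potential removes `F` from the inequality, and separating the continuous convex potential from
the concave function `v ↦ Φ x - ⟨L v, v - x⟩` on `D(L)` produces a functional `g` such that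
`(x, -g)` is monotonically related to the graph of `L`; so `x ∈ D(L)` by maximality. Hemicontinuity
along segments turns the Minty form into the original inequality, and by coercivity of `F` the
solution lies inside the ball when the radius is large, so that the truncation is harmless.
-/

section FiniteFamilies

open Matrix in
theorem exists_mem_stdSimplex_mulVec_nonneg {ι : Type*} [Fintype ι] [Nonempty ι]
    {A : Matrix ι ι ℝ} (hA : ∀ i j, 0 ≤ A i j + A j i) :
    ∃ ν ∈ stdSimplex ℝ ι, 0 ≤ A *ᵥ ν := by
  classical
  have hne : (stdSimplex ℝ ι).Nonempty := ⟨_, single_mem_stdSimplex ℝ (Classical.arbitrary ι)⟩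
  have hconv := convex_stdSimplex ℝ ι
  have hcpt := isCompact_stdSimplex ℝ ι
  obtain ⟨a, ha, b, hb, hab⟩ := Sion.exists_isSaddlePointOn
    (f := fun μ ν : ι → ℝ ↦ toBilin' A μ ν) hne hconv hcpt
    (fun ν _ ↦ (toBilin' A |>.flip ν).continuous_of_finiteDimensional.lowerSemicontinuous
      |>.lowerSemicontinuousOn _)
    (fun ν _ ↦ ((toBilin' A |>.flip ν).convexOn hconv).quasiconvexOn)
    hconv hne hcpt
    (fun μ _ ↦ (toBilin' A μ).continuous_of_finiteDimensional.upperSemicontinuous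
      |>.upperSemicontinuousOn _)
    (fun μ _ ↦ ((toBilin' A μ).concaveOn hconv).quasiconcaveOn)
  simp only [toBilin'_apply'] at hab
  have diag_nonneg : 0 ≤ a ⬝ᵥ A *ᵥ a := by
    have hsymm : 2 * (a ⬝ᵥ A *ᵥ a) = a ⬝ᵥ (A + Aᵀ) *ᵥ a := by
      rw [add_mulVec, dotProduct_add, mulVec_transpose, dotProduct_comm a (a ᵥ* A),
        ← dotProduct_mulVec, two_mul]
    have : 0 ≤ a ⬝ᵥ (A + Aᵀ) *ᵥ a :=
      dotProduct_nonneg_of_nonneg ha.1 fun i ↦ dotProduct_nonneg_of_nonneg (hA i) ha.1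
    linarith
  refine ⟨b, hb, fun i ↦ ?_⟩
  simpa using diag_nonneg.trans (hab (Pi.single i 1) (single_mem_stdSimplex ℝ i) a ha)

variable {V : Type*} [AddCommGroup V] [Module ℝ V]

theorem exists_mem_convexHull_forall_sub_le {ι : Type*} [Finite ι] [Nonempty ι] {y : ι → V}
    {t : ι → V →ₗ[ℝ] ℝ} {Φ : V → ℝ} (ht : ∀ i j, 0 ≤ (t i - t j) (y i - y j))
    (hΦ : ConvexOn ℝ (convexHull ℝ (range y)) Φ) :
    ∃ x ∈ convexHull ℝ (range y), ∀ i, Φ x - Φ (y i) ≤ t i (y i - x) := by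
  have := Fintype.ofFinite ι
  have hy : ∀ i, y i ∈ convexHull ℝ (range y) := fun i ↦ subset_convexHull ℝ _ (mem_range_self i)
  -- The differences of `Φ` are antisymmetric, so they do not affect the sign condition.
  obtain ⟨ν, hν, hAν⟩ := exists_mem_stdSimplex_mulVec_nonneg
    (A := .of fun i j ↦ t i (y i - y j) + Φ (y i) - Φ (y j)) fun i j ↦ by
      have := ht i j
      simp only [LinearMap.sub_apply, map_sub, Matrix.of_apply] at this ⊢
      linarith
  have hν0 : ∀ j ∈ Finset.univ, 0 ≤ ν j := fun j _ ↦ hν.1 j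
  refine ⟨∑ j, ν j • y j, (convex_convexHull ℝ _).sum_mem hν0 hν.2 fun j _ ↦ hy j, fun i ↦ ?_⟩
  have jensen : Φ (∑ j, ν j • y j) ≤ ∑ j, ν j * Φ (y j) :=
    hΦ.map_sum_le hν0 hν.2 fun j _ ↦ hy j
  have expand : (Matrix.of (fun i j ↦ t i (y i - y j) + Φ (y i) - Φ (y j))).mulVec ν i
      = t i (y i - ∑ j, ν j • y j) + Φ (y i) - ∑ j, ν j * Φ (y j) := by
    calc
      _ = ∑ j, (ν j * (t i (y i) + Φ (y i)) - ν j * t i (y j) - ν j * Φ (y j)) :=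
        Finset.sum_congr rfl fun j _ ↦ by simp only [Matrix.of_apply, map_sub]; ring
      _ = _ := by
        simp only [Finset.sum_sub_distrib, ← Finset.sum_mul, hν.2, map_sub, map_sum, map_smul,
          smul_eq_mul]
        ring
  have := expand ▸ hAν i
  simp only [Pi.zero_apply] at this
  linarith

end FiniteFamilies

section WeakCompactness

variable {E : Type*} [AddCommGroup E] [Module ℝ E] [TopologicalSpace E] [IsTopologicalAddGroup E]
  [ContinuousSMul ℝ E] [LocallyConvexSpace ℝ E]

theorem isClosed_toWeakSpace_image {C : Set E} (hC : Convex ℝ C) (hCc : IsClosed C) :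
    IsClosed (toWeakSpace ℝ E '' C) :=
  isClosed_of_closure_subset (by rw [← hC.toWeakSpace_closure ℝ, hCc.closure_eq])

theorem exists_forall_sub_le_of_isCompact_toWeakSpace_image {C : Set E} (hCc : IsClosed C)
    (hne : C.Nonempty) (hK : IsCompact (toWeakSpace ℝ E '' C)) {Φ : E → ℝ}
    (hΦ : ConvexOn ℝ C Φ) (hΦc : LowerSemicontinuousOn Φ C) {ι : Type*} {y : ι → E}
    (hy : ∀ i, y i ∈ C) {t : ι → StrongDual ℝ E} (ht : ∀ i j, 0 ≤ (t i - t j) (y i - y j)) :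
    ∃ x ∈ C, ∀ i, Φ x - Φ (y i) ≤ t i (y i - x) := by
  let A (i : ι) : Set E := {x ∈ C | Φ x + t i x ≤ Φ (y i) + t i (y i)}
  have hAconv i : Convex ℝ (A i) :=
    (hΦ.add ((t i).toLinearMap.convexOn hΦ.1)).convex_le _
  have hAclosed i : IsClosed (A i) := by
    obtain ⟨s, hs, h⟩ := lowerSemicontinuousOn_iff_preimage_Iic.1
      (hΦc.add ((t i).continuous.lowerSemicontinuous.lowerSemicontinuousOn C)) (Φ (y i) + t i (y i))
    rw [show A i = C ∩ s from h]
    exact hCc.inter hs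
  obtain ⟨-, ⟨x, hxC, rfl⟩, hx⟩ := hK.inter_iInter_nonempty (fun i ↦ toWeakSpace ℝ E '' A i)
    (fun i ↦ isClosed_toWeakSpace_image (hAconv i) (hAclosed i)) fun u ↦ by
      rcases u.eq_empty_or_nonempty with rfl | hu
      · simpa using hne
      have : Nonempty u := hu.to_subtype
      have hull : convexHull ℝ (range fun i : u ↦ y i) ⊆ C :=
        convexHull_min (range_subset_iff.2 fun i ↦ hy i) hΦ.1
      obtain ⟨x, hx, hxi⟩ := exists_mem_convexHull_forall_sub_le (y := fun i : u ↦ y i)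
        (t := fun i : u ↦ (t i).toLinearMap) (fun i j ↦ ht i j)
        (hΦ.subset hull (convex_convexHull ℝ _))
      refine ⟨_, mem_image_of_mem _ (hull hx), mem_iInter₂.2 fun i hi ↦
        mem_image_of_mem _ ⟨hull hx, ?_⟩⟩
      have := hxi ⟨i, hi⟩
      simp only [ContinuousLinearMap.coe_coe, map_sub] at this
      linarith
  refine ⟨x, hxC, fun i ↦ ?_⟩
  obtain ⟨x', hx', h⟩ := mem_iInter.1 hx i
  obtain rfl := (toWeakSpace ℝ E).injective h
  rw [map_sub]
  linarith [hx'.2]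

end WeakCompactness

section ReflexiveSpaces

variable {X : Type*} [NormedAddCommGroup X] [NormedSpace ℝ X]

theorem IsReflexiveSpace.completeSpace (hX : IsReflexiveSpace X) : CompleteSpace X :=
  let e := LinearIsometryEquiv.ofSurjective (NormedSpace.inclusionInDoubleDualLi ℝ) hX
  (completeSpace_congr e.isometry.isUniformEmbedding (e := e.toEquiv)).2 inferInstance

theorem IsReflexiveSpace.isCompact_toWeakSpace_image (hX : IsReflexiveSpace X) {C : Set X}
    (hC : Convex ℝ C) (hCc : IsClosed C) (hCb : IsBounded C) :
    IsCompact (toWeakSpace ℝ X '' C) := by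
  have h := NormedSpace.isCompact_closure_of_isBounded ℝ X (toWeakSpace ℝ X '' C)
    (by rwa [preimage_image_eq _ (toWeakSpace ℝ X).injective])
    (fun f _ ↦ hX f)
  rwa [(isClosed_toWeakSpace_image hC hCc).closure_eq] at h

end ReflexiveSpaces

section ConvexFunctions

variable {X : Type*} [NormedAddCommGroup X] [NormedSpace ℝ X] {Φ : X → ℝ}

theorem exists_affine_minorant_of_lt (hΦ : ConvexOn ℝ univ Φ) (hΦc : LowerSemicontinuous Φ) {x : X}
    {a : ℝ} (ha : a < Φ x) : ∃ g : StrongDual ℝ X, ∀ y, a + g (y - x) ≤ Φ y := by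
  obtain ⟨g, c, hle, hx⟩ := hΦ.exists_affine_le_of_lt (𝕜 := ℝ) (mem_univ x) ha isClosed_univ
    (hΦc.lowerSemicontinuousOn univ)
  refine ⟨g, fun y ↦ ?_⟩
  have hgy : g y + c ≤ Φ y := hle ⟨y, mem_univ y⟩
  have hgx : g x + c = a := hx
  rw [map_sub]
  linarith

theorem continuous_of_convexOn_of_lowerSemicontinuous [CompleteSpace X]
    (hΦ : ConvexOn ℝ univ Φ) (hΦc : LowerSemicontinuous Φ) : Continuous Φ := by
  obtain ⟨n, x, hx⟩ := nonempty_interior_of_iUnion_of_closed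
    (f := fun n : ℕ ↦ Φ ⁻¹' Iic (n : ℝ)) (fun n ↦ hΦc.isClosed_preimage n)
    (iUnion_eq_univ_iff.2 fun x ↦ exists_nat_ge (Φ x))
  have hbdd : (𝓝 x).IsBoundedUnder (· ≤ ·) Φ :=
    isBoundedUnder_of_eventually_le (eventually_mem_set.2 (mem_interior_iff_mem_nhds.1 hx))
  rw [← continuousOn_univ]
  have hiff := (hΦ.continuousOn_tfae isOpen_univ ⟨x, mem_univ x⟩).out 3 1
  exact hiff.1 ⟨x, mem_univ x, hbdd⟩

theorem tendsto_rpow_sub_div_atTop {c p : ℝ} (hc : 0 < c) (hp : 1 < p) (d : ℝ) :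
    Tendsto (fun r : ℝ ↦ (c * r ^ p - d) / r) atTop atTop := by
  have hlim : Tendsto (fun r : ℝ ↦ c * r ^ (p - 1) - d / r) atTop atTop :=
    ((tendsto_rpow_atTop (sub_pos.2 hp)).const_mul_atTop hc).atTop_add
      (tendsto_id.const_div_atTop d).neg
  refine hlim.congr' ?_
  filter_upwards [eventually_gt_atTop 0] with r hr
  rw [Real.rpow_sub_one hr.ne']
  ring

end ConvexFunctions

section VariationalInequalities

variable {V : Type*} [AddCommGroup V] [Module ℝ V]

theorem sub_le_of_sub_add_smul_le {s : Set V} {Φ : V → ℝ} (hΦ : ConvexOn ℝ s Φ) {x y : V}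
    (hx : x ∈ s) (hy : y ∈ s) {t : ℝ} (ht : 0 < t) (ht1 : t ≤ 1) {g : V →ₗ[ℝ] ℝ}
    (h : Φ x - Φ (x + t • (y - x)) ≤ g (t • (y - x))) : Φ x - Φ y ≤ g (y - x) := by
  have hconv : Φ (x + t • (y - x)) ≤ (1 - t) * Φ x + t * Φ y := by
    have := hΦ.2 hx hy (sub_nonneg.2 ht1) ht.le (sub_add_cancel 1 t)
    rwa [show (1 - t) • x + t • y = x + t • (y - x) by module] at this
  rw [map_smul, smul_eq_mul] at h
  refine le_of_mul_le_mul_left ?_ ht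
  linarith

theorem forall_sub_le_of_minty {D : Set V} {Φ : V → ℝ} (hΦ : ConvexOn ℝ D Φ)
    {T : V → V →ₗ[ℝ] ℝ} {x : V} (hx : x ∈ D)
    (hT : ∀ y ∈ D, Tendsto (fun t : ℝ ↦ T (x + t • (y - x)) (y - x)) (𝓝[>] 0) (𝓝 (T x (y - x))))
    (hminty : ∀ y ∈ D, Φ x - Φ y ≤ T y (y - x)) : ∀ y ∈ D, Φ x - Φ y ≤ T x (y - x) := by
  refine fun y hy ↦ ge_of_tendsto (hT y hy) ?_
  filter_upwards [Ioc_mem_nhdsGT zero_lt_one] with t ht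
  refine sub_le_of_sub_add_smul_le hΦ hx hy ht.1 ht.2 ?_
  simpa using hminty _ (hΦ.1.add_smul_sub_mem hx hy ⟨ht.1.le, ht.2⟩)

theorem convexOn_of_forall_nonneg_apply_self {B : V →ₗ[ℝ] V →ₗ[ℝ] ℝ} (hB : ∀ v, 0 ≤ B v v) :
    ConvexOn ℝ univ fun v ↦ B v v := by
  refine ⟨convex_univ, fun v _ w _ a b ha hb hab ↦ ?_⟩
  have gap : a * B v v + b * B w w - B (a • v + b • w) (a • v + b • w)
      = a * b * B (v - w) (v - w) := by
    obtain rfl : b = 1 - a := by linarith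
    simp only [map_add, map_sub, map_smul, LinearMap.add_apply, LinearMap.sub_apply,
      LinearMap.smul_apply, smul_eq_mul]
    ring
  have := mul_nonneg (mul_nonneg ha hb) (hB (v - w))
  simp only [smul_eq_mul]
  linarith

theorem isOpen_strict_epigraph {E : Type*} [TopologicalSpace E] {U : Set E} (hU : IsOpen U)
    {φ : E → ℝ} (hφ : ContinuousOn φ U) : IsOpen {q : E × ℝ | q.1 ∈ U ∧ φ q.1 < q.2} := by
  have hgap : ContinuousOn (fun q : E × ℝ ↦ q.2 - φ q.1) (Prod.fst ⁻¹' U) :=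
    continuousOn_snd.sub (hφ.comp continuousOn_fst fun _ hq ↦ hq)
  convert hgap.isOpen_inter_preimage (hU.preimage continuous_fst) (isOpen_Ioi (a := 0)) using 1
  ext q
  simp only [mem_ofPred_eq, mem_inter_iff, mem_preimage, mem_Ioi, sub_pos]

theorem strongDual_prod_real_apply {E : Type*} [AddCommGroup E] [Module ℝ E] [TopologicalSpace E]
    (f : StrongDual ℝ (E × ℝ)) (y : E) (t : ℝ) : f (y, t) = f (y, 0) + t * f (0, 1) := by
  rw [← smul_eq_mul, ← map_smul, ← map_add]
  simp

theorem exists_affine_between {E : Type*} [AddCommGroup E] [Module ℝ E] [TopologicalSpace E]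
    [IsTopologicalAddGroup E] [ContinuousSMul ℝ E] {U : Set E} (hU : IsOpen U) {φ : E → ℝ}
    (hφ : ConvexOn ℝ U φ) (hφc : ContinuousOn φ U) {k : V → ℝ} (hk : ConcaveOn ℝ univ k)
    {j : V →ₗ[ℝ] E} (hj : ∃ v, j v ∈ U) (hkφ : ∀ v, j v ∈ U → k v ≤ φ (j v)) :
    ∃ (g : StrongDual ℝ E) (c : ℝ), (∀ y ∈ U, g y + c ≤ φ y) ∧ ∀ v, k v ≤ g (j v) + c := by
  have hdisj : Disjoint {q : E × ℝ | q.1 ∈ U ∧ φ q.1 < q.2}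
      (j.prodMap LinearMap.id '' {q : V × ℝ | q.1 ∈ univ ∧ q.2 ≤ k q.1}) := by
    rw [disjoint_left]
    rintro - ⟨hqU, hφq⟩ ⟨q, ⟨-, hq⟩, rfl⟩
    exact (hφq.trans_le hq).not_ge (hkφ _ hqU)
  obtain ⟨f, u, hfA, hfB⟩ := geometric_hahn_banach_open hφ.convex_strict_epigraph
    (isOpen_strict_epigraph hU hφc) (hk.convex_hypograph.linear_image (j.prodMap .id)) hdisj
  let f₀ : StrongDual ℝ E := f.comp (.inl ℝ E ℝ)
  let s := f (0, 1)
  have above {y : E} (hy : y ∈ U) {t : ℝ} (ht : φ y < t) : f₀ y + t * s < u :=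
    strongDual_prod_real_apply f y t ▸ hfA (y, t) ⟨hy, ht⟩
  have below (v : V) : u ≤ f₀ (j v) + k v * s :=
    strongDual_prod_real_apply f (j v) (k v) ▸ hfB _ ⟨(v, k v), ⟨mem_univ v, le_rfl⟩, rfl⟩
  have hs_neg : s < 0 := by
    obtain ⟨v, hv⟩ := hj
    have h1 := above hv (lt_add_one _)
    nlinarith [below v, hkφ v hv]
  have affine_eq (y : E) : (-s⁻¹ • f₀) y + u / s = (u - f₀ y) / s := by
    simp only [smul_apply, smul_eq_mul]
    ring
  refine ⟨-s⁻¹ • f₀, u / s, fun y hy ↦ ?_, fun v ↦ ?_⟩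
  · by_contra! hlt
    have := above hy hlt
    rw [affine_eq, div_mul_cancel₀ _ hs_neg.ne] at this
    linarith
  · rw [affine_eq, le_div_iff_of_neg hs_neg]
    linarith [below v]

end VariationalInequalities

section MonotoneOperators

variable {X : Type*} [NormedAddCommGroup X] [NormedSpace ℝ X]

/-- Monotonicity in the sense of Minty and Browder of an operator from a normed space to its
dual. -/
def IsMonotoneOperator (F : X → StrongDual ℝ X) : Prop :=
  ∀ u v, 0 ≤ (F u - F v) (u - v)

/-- Hemicontinuity of an operator from a normed space to its dual: continuity along lines into the
weak-star topology. Demanding the limit only at `t = 0` loses nothing, as `u` is arbitrary. -/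
def IsHemicontinuous (F : X → StrongDual ℝ X) : Prop :=
  ∀ u v w, Tendsto (fun t : ℝ ↦ F (u + t • v) w) (𝓝 0) (𝓝 (F u w))

/-- A maximal monotone linear operator from a subspace of a normed space to the dual. By linearity,
monotonicity is tested against `0` only. -/
structure IsMaximalMonotone (L : X →ₗ.[ℝ] StrongDual ℝ X) : Prop where
  nonneg : ∀ u : L.domain, 0 ≤ L u u
  maximal : ∀ (x : X) (g : StrongDual ℝ X), (∀ v : L.domain, 0 ≤ (g - L v) (x - v)) →
    (x, g) ∈ L.graph

/-- The point `u` solves the variational inequality on `C` driven by the sum of the unbounded linear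
operator `L` and the nonlinear operator `F`, with convex potential `Φ`. -/
def IsVISolution (L : X →ₗ.[ℝ] StrongDual ℝ X) (F : X → StrongDual ℝ X) (Φ : X → ℝ) (C : Set X)
    (u : L.domain) : Prop :=
  ↑u ∈ C ∧ ∀ v : L.domain, ↑v ∈ C → Φ u - Φ v ≤ (L u + F u) (v - u)

variable {L : X →ₗ.[ℝ] StrongDual ℝ X} {F : X → StrongDual ℝ X} {Φ : X → ℝ} {C : Set X}

theorem convexOn_linearPMap_apply_self (hL : ∀ v : L.domain, 0 ≤ L v v) :
    ConvexOn ℝ univ fun v : L.domain ↦ L v v :=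
  convexOn_of_forall_nonneg_apply_self
    (B := (ContinuousLinearMap.coeLM ℝ ∘ₗ L.toFun).compl₂ L.domain.subtype) hL

theorem IsMaximalMonotone.mem_domain (hL : IsMaximalMonotone L)
    (hint : ∃ v : L.domain, ↑v ∈ interior C) (hΦ : ConvexOn ℝ C Φ) (hΦc : ContinuousOn Φ C)
    {x : X} (hx : x ∈ C) (hminty : ∀ v : L.domain, ↑v ∈ C → Φ x - Φ v ≤ L v (v - x)) :
    x ∈ L.domain := by
  have hk : ConcaveOn ℝ univ fun v : L.domain ↦ Φ x - L v (v - x) := by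
    have hlin : ConcaveOn ℝ univ fun v : L.domain ↦ L v x :=
      LinearMap.concaveOn ((ContinuousLinearMap.apply ℝ ℝ x).toLinearMap ∘ₗ L.toFun) convex_univ
    refine ((hlin.sub (convexOn_linearPMap_apply_self hL.nonneg)).add_const (Φ x)).congr
      fun v _ ↦ ?_
    simp only [Pi.add_apply, Pi.sub_apply, map_sub]
    ring
  obtain ⟨g, c, hgΦ, hkg⟩ := exists_affine_between isOpen_interior
    (hΦ.subset interior_subset hΦ.1.interior) (hΦc.mono interior_subset) hk
    (j := L.domain.subtype) hint fun v hv ↦ sub_le_comm.1 (hminty v (interior_subset hv))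
  have hx_closure : x ∈ closure (interior C) := by
    obtain ⟨v, hv⟩ := hint
    rw [hΦ.1.closure_interior_eq_closure_of_nonempty_interior ⟨v, hv⟩]
    exact subset_closure hx
  have hgx : g x + c ≤ Φ x := ContinuousWithinAt.closure_le hx_closure
    (by fun_prop) ((hΦc x hx).mono interior_subset) hgΦ
  have hgraph : (x, -g) ∈ L.graph := hL.maximal x (-g) fun v ↦ by
    have := hkg v
    simp only [Submodule.subtype_apply, map_sub, sub_apply, neg_apply] at this ⊢
    linarith
  exact LinearPMap.mem_domain_of_mem_graph hgraph

theorem IsVISolution.of_minty (hΦ : ConvexOn ℝ C Φ) (hF : IsHemicontinuous F) {u : L.domain}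
    (hu : ↑u ∈ C) (hminty : ∀ v : L.domain, ↑v ∈ C → Φ u - Φ v ≤ (L v + F v) (v - u)) :
    IsVISolution L F Φ C u := by
  refine ⟨hu, forall_sub_le_of_minty (hΦ.comp_linearMap L.domain.subtype)
    (T := fun v ↦ (L v + F v : StrongDual ℝ X).toLinearMap ∘ₗ L.domain.subtype) hu
    (fun v _ ↦ ?_) hminty⟩
  have hLlim : Tendsto (fun t : ℝ ↦ L u (v - u) + t * L (v - u) (v - u)) (𝓝[>] 0)
      (𝓝 (L u (v - u))) := by
    have : Continuous fun t : ℝ ↦ L u (v - u) + t * L (v - u) (v - u) := by fun_prop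
    simpa using (this.tendsto 0).mono_left nhdsWithin_le_nhds
  have hFlim := (hF u (v - u) (v - u)).mono_left (nhdsWithin_le_nhds (s := Ioi 0))
  simpa [LinearPMap.map_add, LinearPMap.map_smul] using hLlim.add hFlim

theorem IsVISolution.of_inter_nhds (hΦ : ConvexOn ℝ C Φ) {u : L.domain} {B : Set X}
    (hB : B ∈ 𝓝 (u : X)) (hu : IsVISolution L F Φ (C ∩ B) u) : IsVISolution L F Φ C u := by
  refine ⟨hu.1.1, fun v hv ↦ ?_⟩
  have hlim : Tendsto (fun t : ℝ ↦ (u + t • (v - u) : X)) (𝓝[>] 0) (𝓝 u) := by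
    have : Continuous fun t : ℝ ↦ (u + t • (v - u) : X) := by fun_prop
    simpa using (this.tendsto 0).mono_left nhdsWithin_le_nhds
  obtain ⟨t, htB, ht⟩ := ((hlim.eventually hB).and (Ioc_mem_nhdsGT zero_lt_one)).exists
  refine sub_le_of_sub_add_smul_le hΦ hu.1.1 hv ht.1 ht.2
    (g := (L u + F u : StrongDual ℝ X).toLinearMap) ?_
  simpa using hu.2 (u + t • (v - u)) ⟨hΦ.1.add_smul_sub_mem hu.1.1 hv ⟨ht.1.le, ht.2⟩, htB⟩

theorem exists_isVISolution_of_isCompact_toWeakSpace_image (hL : IsMaximalMonotone L)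
    (hF : IsMonotoneOperator F) (hFh : IsHemicontinuous F) (hFb : IsBounded (F '' C))
    (hCc : IsClosed C) (hK : IsCompact (toWeakSpace ℝ X '' C))
    (hint : ∃ v : L.domain, ↑v ∈ interior C) (hΦ : ConvexOn ℝ C Φ) (hΦc : ContinuousOn Φ C) :
    ∃ u, IsVISolution L F Φ C u := by
  obtain ⟨x, hxC, hx⟩ := exists_forall_sub_le_of_isCompact_toWeakSpace_image hCc
    (hint.elim fun v hv ↦ ⟨v, interior_subset hv⟩) hK hΦ hΦc.lowerSemicontinuousOn
    (y := fun v : {v : L.domain // ↑v ∈ C} ↦ (v.1 : X)) Subtype.prop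
    (t := fun v ↦ L v.1 + F v.1) fun v w ↦ by
      have hLvw := hL.nonneg (v.1 - w.1)
      have hFvw := hF v.1 w.1
      simp only [LinearPMap.map_sub, AddSubgroupClass.coe_sub, sub_apply, add_apply, map_sub]
        at hLvw hFvw ⊢
      linarith
  have hminty : ∀ v : L.domain, ↑v ∈ C → Φ x - Φ v ≤ (L v + F v) (v - x) :=
    fun v hv ↦ hx ⟨v, hv⟩
  -- A bound for `F` on `C` lets the potential absorb `F`, so only `L` decides whether `x` lies in
  -- the domain.
  obtain ⟨r, hr⟩ := hFb.exists_norm_le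
  have hr0 : 0 ≤ r := (norm_nonneg _).trans (hr _ (mem_image_of_mem F hxC))
  have hdist : ConvexOn ℝ C fun y ↦ r * dist y x := (convexOn_dist x hΦ.1).smul hr0
  have hxL : x ∈ L.domain := hL.mem_domain (Φ := fun y ↦ Φ y + r * dist y x) hint
    (hΦ.add hdist) (by fun_prop) hxC fun v hv ↦ by
      have hFv : F v (v - x) ≤ r * dist ↑v x := dist_eq_norm (v : X) x ▸
        (le_abs_self _).trans ((F v).le_of_opNorm_le (hr _ (mem_image_of_mem F hv)) _)
      have := hminty v hv
      simp only [add_apply, dist_self, mul_zero] at this ⊢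
      linarith
  exact ⟨⟨x, hxL⟩, .of_minty hΦ hFh hxC hminty⟩

theorem exists_isVISolution_of_lt_on_sphere (hX : IsReflexiveSpace X) (hL : IsMaximalMonotone L)
    (hF : IsMonotoneOperator F) (hFh : IsHemicontinuous F) {R : ℝ} (hR : 0 < R)
    (hFb : IsBounded (F '' Metric.closedBall 0 R)) (hCc : IsClosed C) (h0 : 0 ∈ interior C)
    (hΦ : ConvexOn ℝ C Φ) (hΦc : ContinuousOn Φ C)
    (hsphere : ∀ u ∈ C, ‖u‖ = R → Φ 0 - Φ u < F u u) : ∃ u, IsVISolution L F Φ C u := by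
  have hB : Convex ℝ (C ∩ Metric.closedBall 0 R) := hΦ.1.inter (convex_closedBall 0 R)
  have hBc : IsClosed (C ∩ Metric.closedBall 0 R) := hCc.inter Metric.isClosed_closedBall
  have hBb : IsBounded (C ∩ Metric.closedBall 0 R) :=
    Metric.isBounded_closedBall.subset inter_subset_right
  have h0B : ((0 : L.domain) : X) ∈ interior (C ∩ Metric.closedBall 0 R) := by
    rw [mem_interior_iff_mem_nhds] at h0 ⊢
    exact inter_mem h0 (Metric.closedBall_mem_nhds 0 hR)
  obtain ⟨u, hu⟩ := exists_isVISolution_of_isCompact_toWeakSpace_image hL hF hFh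
    (hFb.subset (image_mono inter_subset_right)) hBc
    (hX.isCompact_toWeakSpace_image hB hBc hBb) ⟨0, h0B⟩ (hΦ.subset inter_subset_left hB)
    (hΦc.mono inter_subset_left)
  refine ⟨u, .of_inter_nhds hΦ (Metric.closedBall_mem_nhds_of_mem ?_) hu⟩
  rw [mem_ball_zero_iff]
  refine (mem_closedBall_zero_iff.1 hu.1.2).lt_of_ne fun huR ↦ ?_
  have htest := hu.2 0 (interior_subset h0B)
  have := hL.nonneg u
  simp only [ZeroMemClass.coe_zero, zero_sub, map_neg, add_apply] at htest
  linarith [hsphere u hu.1.1 huR]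

theorem exists_isVISolution (hX : IsReflexiveSpace X) (hL : IsMaximalMonotone L)
    (hF : IsMonotoneOperator F) (hFh : IsHemicontinuous F)
    (hFb : ∀ B, IsBounded B → IsBounded (F '' B))
    (hFc : Tendsto (fun u ↦ F u u / ‖u‖) (cobounded X) atTop) (hCc : IsClosed C)
    (hC : Convex ℝ C) (h0 : 0 ∈ interior C) (hΦ : ConvexOn ℝ univ Φ)
    (hΦc : LowerSemicontinuous Φ) : ∃ u, IsVISolution L F Φ C u := by
  have := hX.completeSpace
  obtain ⟨g, hg⟩ := exists_affine_minorant_of_lt hΦ hΦc (sub_one_lt (Φ 0))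
  obtain ⟨R, -, hR⟩ := hasBasis_cobounded_norm.eventually_iff.1
    (hFc.eventually_ge_atTop (‖g‖ + 2))
  refine exists_isVISolution_of_lt_on_sphere hX hL hF hFh (R := max R 1) (by positivity)
    (hFb _ Metric.isBounded_closedBall) hCc h0 (hΦ.subset (subset_univ C) hC)
    (continuous_of_convexOn_of_lowerSemicontinuous hΦ hΦc).continuousOn fun u _ hu ↦ ?_
  have hu1 : 1 ≤ ‖u‖ := hu ▸ le_max_right R 1
  have hFu : (‖g‖ + 2) * ‖u‖ ≤ F u u :=
    (le_div_iff₀ (by positivity)).1 (hR ((le_max_left R 1).trans hu.ge))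
  have hgu := neg_le_of_abs_le (g.le_opNorm u)
  have := hg u
  rw [sub_zero] at this
  linarith

theorem IsVISolution.eq_of_strict (hL : ∀ w : L.domain, 0 ≤ L w w)
    (hF : ∀ u v, u ≠ v → 0 < (F u - F v) (u - v)) {u v : L.domain} (hu : IsVISolution L F Φ C u)
    (hv : IsVISolution L F Φ C v) : u = v := by
  by_contra hne
  have h1 := hu.2 v hv.1
  have h2 := hv.2 u hu.1
  have hLuv := hL (u - v)
  have hFuv := hF u v (Subtype.coe_injective.ne hne)
  simp only [LinearPMap.map_sub, AddSubgroupClass.coe_sub, sub_apply, add_apply, map_sub]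
    at h1 h2 hLuv hFuv
  linarith

end MonotoneOperators

namespace QVISetting

variable {X Y : Type*} [NormedAddCommGroup X] [NormedSpace ℝ X]
  [NormedAddCommGroup Y] [NormedSpace ℝ Y] {S : QVISetting X Y}

/-- The operator `L` of the setting on its domain `D(L)`, as a partially defined linear map. -/
def toLinearPMap (hL : S.HL) : X →ₗ.[ℝ] StrongDual ℝ X where
  domain :=
    { carrier := S.DL
      zero_mem' := hL.1
      add_mem' := fun {a b} ha hb ↦ by simpa using (hL.2.1 a ha b hb 1 1).1
      smul_mem' := fun c a ha ↦ by simpa using (hL.2.1 a ha a ha c 0).1 }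
  toFun :=
    { toFun := fun u ↦ S.L u
      map_add' := fun u v ↦ by simpa using (hL.2.1 u u.2 v v.2 1 1).2
      map_smul' := fun c u ↦ by simpa using (hL.2.1 u u.2 u u.2 c 0).2 }

theorem isMaximalMonotone_toLinearPMap (hL : S.HL) : IsMaximalMonotone (toLinearPMap hL) where
  nonneg u := by
    have := hL.2.2.2.1 u u.2 0 hL.1
    have hL0 : S.L 0 = 0 := (toLinearPMap hL).map_zero
    rwa [hL0, sub_zero, sub_zero] at this
  maximal x g h := by
    obtain ⟨hx, rfl⟩ := hL.2.2.2.2 x g fun v hv ↦ h ⟨v, hv⟩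
    exact (LinearPMap.mem_graph_iff _).2 ⟨⟨x, hx⟩, rfl, rfl⟩

variable (S) in
/-- The convex potential of Problem 2 with parameters `(z, ξ)`: the function `Ψ(z, ·)` with the
linear terms `-E` and `ξ ∘ γ` absorbed. -/
def potential (z : X) (ξ : StrongDual ℝ Y) (y : X) : ℝ :=
  S.Psi z y + (ξ ∘L S.gam - S.E) y

theorem mem_Sol2_iff (hL : S.HL) {z x : X} {ξ : StrongDual ℝ Y} :
    x ∈ S.Sol2 z ξ ↔ ∃ hx : x ∈ (toLinearPMap hL).domain,
      IsVISolution (toLinearPMap hL) S.F (S.potential z ξ) (S.M z) ⟨x, hx⟩ := by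
  have hineq (y : X) : S.potential z ξ x - S.potential z ξ y ≤ (S.L x + S.F x) (y - x) ↔
      S.Psi z x - S.Psi z y ≤
        S.L x (y - x) + S.F x (y - x) - S.E (y - x) + ξ (S.gam (y - x)) := by
    simp only [potential, add_apply, sub_apply, ContinuousLinearMap.comp_apply, map_sub]
    constructor <;> intro h <;> linarith
  constructor
  · rintro ⟨⟨hxM, hxL⟩, hx⟩
    exact ⟨hxL, hxM, fun v hv ↦ (hineq v).2 (hx v ⟨hv, v.2⟩)⟩
  · rintro ⟨hxL, hxM, hx⟩
    exact ⟨⟨hxM, hxL⟩, fun y hy ↦ (hineq y).1 (hx ⟨y, hy.2⟩ hy.1)⟩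

theorem tendsto_F_div_norm_atTop (hF : S.HF) :
    Tendsto (fun u ↦ S.F u u / ‖u‖) (cobounded X) atTop := by
  obtain ⟨-, -, -, hp, hc, -, hcoer⟩ := hF
  refine tendsto_atTop_mono (fun u ↦ div_le_div_of_nonneg_right (hcoer u) (norm_nonneg u))
    ((tendsto_rpow_sub_div_atTop hc hp S.dF).comp tendsto_norm_cobounded_atTop)

theorem sol2_nonempty (hX : IsReflexiveSpace X) (hL : S.HL) (hF : S.HF) {z : X}
    (hCc : IsClosed (S.M z)) (hC : Convex ℝ (S.M z)) (h0 : 0 ∈ interior (S.M z))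
    (hPsi : ConvexOn ℝ univ (S.Psi z)) (hPsic : LowerSemicontinuous (S.Psi z))
    (ξ : StrongDual ℝ Y) : (S.Sol2 z ξ).Nonempty := by
  let l : StrongDual ℝ X := ξ ∘L S.gam - S.E
  obtain ⟨u, hu⟩ := exists_isVISolution hX (isMaximalMonotone_toLinearPMap hL) hF.2.1 hF.2.2.1 hF.1
    (tendsto_F_div_norm_atTop hF) hCc hC h0 (Φ := S.potential z ξ)
    (hPsi.add (l.toLinearMap.convexOn convex_univ)) (hPsic.add l.continuous.lowerSemicontinuous)
  exact ⟨u, (mem_Sol2_iff hL).2 ⟨u.2, hu⟩⟩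

theorem sol2_subsingleton (hL : S.HL) (hF : S.StrictlyMonotoneF) (z : X) (ξ : StrongDual ℝ Y) :
    (S.Sol2 z ξ).Subsingleton := by
  intro x hx y hy
  obtain ⟨hxL, hx⟩ := (mem_Sol2_iff hL).1 hx
  obtain ⟨hyL, hy⟩ := (mem_Sol2_iff hL).1 hy
  exact congrArg Subtype.val (hx.eq_of_strict (isMaximalMonotone_toLinearPMap hL).nonneg hF hy)

end QVISetting

theorem statement2_general {X Y : Type*} [NormedAddCommGroup X] [NormedSpace ℝ X]
    [NormedAddCommGroup Y] [NormedSpace ℝ Y] (hreflX : IsReflexiveSpace X) (S : QVISetting X Y)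
    (hL : S.HL) (hF : S.HF)
    (hM : ∀ z ∈ S.K, IsClosed (S.M z) ∧ Convex ℝ (S.M z) ∧ 0 ∈ interior (S.M z))
    (hPsi : ∀ z ∈ S.K, ConvexOn ℝ univ (S.Psi z) ∧ LowerSemicontinuous (S.Psi z)) :
    (∀ z ∈ S.K, ∀ ξ : Y →L[ℝ] ℝ, (S.Sol2 z ξ).Nonempty) ∧
    (S.StrictlyMonotoneF →
      ∀ z ∈ S.K, ∀ ξ : Y →L[ℝ] ℝ, ∃! x : X, x ∈ S.Sol2 z ξ) := by
  have hne : ∀ z ∈ S.K, ∀ ξ : Y →L[ℝ] ℝ, (S.Sol2 z ξ).Nonempty := fun z hz ξ ↦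
    have ⟨hclosed, hconvex, hzero⟩ := hM z hz
    QVISetting.sol2_nonempty hreflX hL hF hclosed hconvex hzero (hPsi z hz).1 (hPsi z hz).2 ξ
  refine ⟨hne, fun hstrict z hz ξ ↦ ?_⟩
  obtain ⟨x, hx⟩ := hne z hz ξ
  exact ⟨x, hx, fun y hy ↦ QVISetting.sol2_subsingleton hL hstrict z ξ hy hx⟩

/-- under the hypotheses of Statement 0, for every pair of
parameters `(z, ξ) ∈ K × Y*` the solution set `S(z, ξ)` of Problem 2 is
nonempty; moreover, if `F` is strictly monotone, then it is a singleton. -/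
theorem statement2 {X Y : Type*} [NormedAddCommGroup X] [NormedSpace ℝ X]
    [NormedAddCommGroup Y] [NormedSpace ℝ Y] [CompleteSpace X] [CompleteSpace Y]
    [TopologicalSpace.SeparableSpace X] [TopologicalSpace.SeparableSpace Y]
    (hreflX : IsReflexiveSpace X) (hreflY : IsReflexiveSpace Y)
    (S : QVISetting X Y)
    (hK : S.HK) (hL : S.HL) (hM : S.HM) (hF : S.HF) (hG : S.HG)
    (hgam : S.Hgam) (hPsi : S.HPsi)
    (hsmall : S.cG * ‖S.gam‖ ^ S.p < S.cF) :
    (∀ z ∈ S.K, ∀ ξ : Y →L[ℝ] ℝ, (S.Sol2 z ξ).Nonempty) ∧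
    (S.StrictlyMonotoneF →
      ∀ z ∈ S.K, ∀ ξ : Y →L[ℝ] ℝ, ∃! x : X, x ∈ S.Sol2 z ξ) := by
  exact statement2_general hreflX S hL hF
    (fun z hz ↦ ⟨(hM.1 z hz).2.1, (hM.1 z hz).2.2.1,
      interior_mono (biInter_subset_of_mem hz) hM.2.1⟩)
    fun z _ ↦ hPsi.1 z
end
end

section
/- Under hypotheses H(M), H(F), H(G), H(γ), H(Ψ), E ∈ X*, the smallness condition c_F > c_G‖γ‖^p, and assuming additionally that F is strictly monotone (so that the solution map S of Problem 2 is single-valued), the map S : K × Y* → K ∩ W is bounded: it maps bounded subsets of K × Y* (with the norm ‖z‖_X + ‖ξ‖_{Y*}) to bounded subsets of W (with the graph norm ‖x‖_W = ‖x‖_X + ‖Lx‖_{X*}). -/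
open Filter Topology Bornology Set

noncomputable section

/-!
Testing Problem 2 with `y = 0` gives an energy inequality in which the coercivity of `F` dominates
all other terms, since they grow like `‖x‖` or `‖x‖ ^ β` with `β < p`; this bounds `‖x‖`. For
`‖L x‖`, test with the points `y ∈ D(L)` of a ball around `0` that lies in every `M z`: as
`⟨L x, x⟩ ≥ 0`, the inequality bounds `-⟨L x, y⟩` by quantities already controlled, and by density
of `D(L)` a one-sided bound of a functional on such points bounds its norm.
-/

theorem isLittleO_rpow_rpow_atTop {a b : ℝ} (hab : a < b) :
    (fun t : ℝ => t ^ a) =o[atTop] fun t => t ^ b := by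
  have hquot : (fun t : ℝ => t ^ (-(b - a))) =ᶠ[atTop] fun t => t ^ a / t ^ b := by
    filter_upwards [eventually_gt_atTop 0] with t ht
    rw [← Real.rpow_sub ht, neg_sub]
  have hlim := (tendsto_rpow_neg_atTop (sub_pos.2 hab)).congr' hquot
  refine Asymptotics.isLittleO_of_tendsto' ?_ hlim
  filter_upwards [eventually_gt_atTop 0] with t ht h0
  exact absurd h0 (Real.rpow_pos_of_pos ht b).ne'

theorem exists_forall_le_of_mul_rpow_le {p β c : ℝ} (hp : 1 < p) (hβp : β < p) (hc : 0 < c)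
    (A B D : ℝ) : ∃ R : ℝ, ∀ t : ℝ, c * t ^ p ≤ A * t + B * t ^ β + D → t ≤ R := by
  have hlin : (fun t : ℝ => A * t) =o[atTop] fun t => t ^ p := by
    simpa only [Real.rpow_one] using (isLittleO_rpow_rpow_atTop hp).const_mul_left A
  have hpow : (fun t : ℝ => B * t ^ β) =o[atTop] fun t => t ^ p :=
    (isLittleO_rpow_rpow_atTop hβp).const_mul_left B
  have hconst : (fun _ : ℝ => D) =o[atTop] fun t => t ^ p := by
    simpa using (isLittleO_rpow_rpow_atTop (zero_lt_one.trans hp)).const_mul_left D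
  have hbound := ((hlin.add hpow).add hconst).def (half_pos hc)
  obtain ⟨R, hR⟩ := eventually_atTop.1 (hbound.and (eventually_gt_atTop 0))
  refine ⟨R, fun t ht => le_of_not_gt fun hRt => ?_⟩
  obtain ⟨hle, htpos⟩ := hR t hRt.le
  have htp : 0 < t ^ p := Real.rpow_pos_of_pos htpos p
  rw [Real.norm_of_nonneg htp.le] at hle
  have hcontra : c * t ^ p ≤ c / 2 * t ^ p := ht.trans ((Real.le_norm_self _).trans hle)
  linarith [mul_pos hc htp]

theorem norm_le_div_of_forall_mem_ball_inter_dense {V : Type*} [NormedAddCommGroup V]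
    [NormedSpace ℝ V] {f : V →L[ℝ] ℝ} {D : Set V} {δ C : ℝ} (hD : Dense D) (hδ : 0 < δ)
    (hf : ∀ y ∈ Metric.ball 0 δ ∩ D, f y ≤ C) : ‖f‖ ≤ C / δ := by
  have hclosed : IsClosed {y | f y ≤ C} := isClosed_le f.continuous continuous_const
  have hball : Metric.ball 0 δ ⊆ {y | f y ≤ C} :=
    (hD.open_subset_closure_inter Metric.isOpen_ball).trans (closure_minimal hf hclosed)
  have hclosedBall : ∀ y ∈ Metric.closedBall 0 δ, f y ≤ C := fun y hy =>
    closure_minimal hball hclosed (by rwa [closure_ball _ hδ.ne'])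
  refine f.opNorm_bound_of_ball_bound hδ C fun y hy => abs_le'.2 ⟨hclosedBall y hy, ?_⟩
  rw [← map_neg]
  exact hclosedBall (-y) (by simpa using hy)

namespace QVISetting

variable {X Y : Type*} [NormedAddCommGroup X] [NormedSpace ℝ X]
  [NormedAddCommGroup Y] [NormedSpace ℝ Y] (S : QVISetting X Y)

/-- The `p`-coercivity of `F` in H(F), which controls `‖x‖` for a solution `x` of Problem 2. -/
def CoerciveF : Prop :=
  ∀ x : X, S.cF * ‖x‖ ^ S.p - S.dF ≤ S.F x x

/-- The lower growth bound on `Ψ` in H(Ψ)(iv), uniform in the first argument; it keeps `Ψ` from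
cancelling the coercivity of `F`. -/
def PsiLowerGrowth : Prop :=
  ∀ v y : X, -S.cPsi * ‖y‖ ^ S.beta - S.dPsi ≤ S.Psi v y

/-- `Ψ` is bounded above on bounded subsets of `X × X`; in the a priori estimates this takes the
place of the modulus `b_Ψ` of H(Ψ)(ii). -/
def PsiBoundedAbove : Prop :=
  ∀ r : ℝ, ∃ C : ℝ, ∀ v y : X, ‖v‖ ≤ r → ‖y‖ ≤ r → S.Psi v y ≤ C

/-- The functional `E - γ* ξ`, the right-hand side of Problem 2 once the term in `ξ` is moved
there. -/
def load (ξ : Y →L[ℝ] ℝ) : X →L[ℝ] ℝ :=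
  S.E - ξ ∘L S.gam

variable {S}

theorem norm_load_le (ξ : Y →L[ℝ] ℝ) : ‖S.load ξ‖ ≤ ‖S.E‖ + ‖ξ‖ * ‖S.gam‖ :=
  (norm_sub_le _ _).trans (by gcongr; exact ξ.opNorm_comp_le S.gam)

theorem HL.apply_self_nonneg (hL : S.HL) {x : X} (hx : x ∈ S.DL) : 0 ≤ S.L x x := by
  obtain ⟨hzero, hlin, -, hmono, -⟩ := hL
  have hL0 : S.L 0 = 0 := by simpa using (hlin 0 hzero 0 hzero 0 0).2
  simpa [hL0] using hmono x hx 0 hzero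

theorem HPsi.psiBoundedAbove (hPsi : S.HPsi) : S.PsiBoundedAbove := by
  intro r
  obtain ⟨-, ⟨η, b, hη, -, hb, hbbdd, hbsub, -⟩, -, -, ⟨-, hPsi0⟩, -⟩ := hPsi
  have hball : IsBounded (Metric.closedBall (0 : X) r) := Metric.isBounded_closedBall
  obtain ⟨Cb, hCb⟩ := hbbdd _ _ {0} hball hball isBounded_singleton
  refine ⟨S.ePsi + Cb * r ^ η, fun v y hv hy => ?_⟩
  have hbC : b v y 0 ≤ Cb := hCb v (by simpa using hv) y (by simpa using hy) 0 rfl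
  have hdiff : S.Psi v y - S.Psi v 0 ≤ Cb * r ^ η :=
    calc S.Psi v y - S.Psi v 0 ≤ b v y 0 * ‖y‖ ^ η := by simpa using hbsub v y 0
      _ ≤ Cb * r ^ η := by
        have := (hb v y 0).trans hbC
        gcongr
  linarith [le_of_abs_le (hPsi0 v)]

theorem exists_ball_subset_M (hM : (0 : X) ∈ interior (⋂ w ∈ S.K, S.M w)) :
    ∃ δ > 0, ∀ z ∈ S.K, Metric.ball 0 δ ⊆ S.M z := by
  obtain ⟨δ, hδ, hball⟩ := Metric.mem_nhds_iff.1 (mem_interior_iff_mem_nhds.1 hM)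
  exact ⟨δ, hδ, fun z hz => hball.trans (biInter_subset_of_mem hz)⟩

section Solutions

variable {z x : X} {ξ : Y →L[ℝ] ℝ}

theorem Psi_sub_le_of_mem_Sol2 (hx : x ∈ S.Sol2 z ξ) {y : X} (hy : y ∈ S.M z ∩ S.DL) :
    S.Psi z x - S.Psi z y ≤ S.L x (y - x) + (S.F x - S.load ξ) (y - x) := by
  have hvi := hx.2 y hy
  simp only [load, sub_apply, ContinuousLinearMap.comp_apply]
  linarith

theorem mul_norm_rpow_le_of_mem_Sol2 (hF : S.CoerciveF) (hPsi : S.PsiLowerGrowth)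
    (hx : x ∈ S.Sol2 z ξ) (hLx : 0 ≤ S.L x x) (h0 : 0 ∈ S.M z ∩ S.DL) :
    S.cF * ‖x‖ ^ S.p ≤
      ‖S.load ξ‖ * ‖x‖ + S.cPsi * ‖x‖ ^ S.beta + (S.Psi z 0 + S.dPsi + S.dF) := by
  have htest := Psi_sub_le_of_mem_Sol2 hx h0
  simp only [zero_sub, map_neg, sub_apply] at htest
  have hload : S.load ξ x ≤ ‖S.load ξ‖ * ‖x‖ := (le_abs_self _).trans ((S.load ξ).le_opNorm x)
  linarith [hF x, hPsi z x]

theorem neg_L_apply_le_of_mem_Sol2 (hx : x ∈ S.Sol2 z ξ) (hLx : 0 ≤ S.L x x) {y : X}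
    (hy : y ∈ S.M z ∩ S.DL) :
    -S.L x y ≤ ‖S.F x - S.load ξ‖ * ‖y - x‖ + (S.Psi z y - S.Psi z x) := by
  have htest := Psi_sub_le_of_mem_Sol2 hx hy
  have hop : (S.F x - S.load ξ) (y - x) ≤ ‖S.F x - S.load ξ‖ * ‖y - x‖ :=
    (le_abs_self _).trans ((S.F x - S.load ξ).le_opNorm (y - x))
  rw [map_sub (S.L x)] at htest
  linarith

theorem norm_L_le_of_mem_Sol2 (hdense : Dense S.DL) (hPsi : S.PsiLowerGrowth)
    (hcPsi : 0 ≤ S.cPsi) (hβ : 0 ≤ S.beta) {δ A R C : ℝ} (hδ : 0 < δ)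
    (hball : Metric.ball 0 δ ⊆ S.M z) (hC : ∀ y ∈ Metric.ball 0 δ, S.Psi z y ≤ C)
    (hx : x ∈ S.Sol2 z ξ) (hLx : 0 ≤ S.L x x) (hxR : ‖x‖ ≤ R) (hA : ‖S.F x - S.load ξ‖ ≤ A) :
    ‖S.L x‖ ≤ (A * (δ + R) + (C + S.cPsi * R ^ S.beta + S.dPsi)) / δ := by
  rw [← norm_neg]
  refine norm_le_div_of_forall_mem_ball_inter_dense hdense hδ fun y ⟨hyδ, hyD⟩ => ?_
  have hyx : ‖y - x‖ ≤ δ + R :=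
    (norm_sub_le y x).trans (add_le_add (mem_ball_zero_iff.1 hyδ).le hxR)
  have hPsix : -(S.cPsi * R ^ S.beta + S.dPsi) ≤ S.Psi z x := by
    have : S.cPsi * ‖x‖ ^ S.beta ≤ S.cPsi * R ^ S.beta := by gcongr
    linarith [hPsi z x]
  calc -S.L x y ≤ ‖S.F x - S.load ξ‖ * ‖y - x‖ + (S.Psi z y - S.Psi z x) :=
        neg_L_apply_le_of_mem_Sol2 hx hLx ⟨hball hyδ, hyD⟩
    _ ≤ A * (δ + R) + (S.Psi z y - S.Psi z x) := by
        have := (norm_nonneg _).trans hA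
        gcongr
    _ ≤ A * (δ + R) + (C + S.cPsi * R ^ S.beta + S.dPsi) := by linarith [hC y hyδ]

end Solutions

theorem exists_norm_le_of_mem_Sol2 (hLzero : 0 ∈ S.DL) (hLnonneg : ∀ x ∈ S.DL, 0 ≤ S.L x x)
    (hM : ∀ z ∈ S.K, 0 ∈ S.M z) (hp : 1 < S.p) (hcF : 0 < S.cF) (hF : S.CoerciveF)
    (hβp : S.beta < S.p) (hPsiLower : S.PsiLowerGrowth) (hPsiUpper : S.PsiBoundedAbove) (r ρ : ℝ) :
    ∃ R : ℝ, ∀ z ∈ S.K, ∀ ξ : Y →L[ℝ] ℝ, ‖z‖ ≤ r → ‖S.load ξ‖ ≤ ρ →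
      ∀ x ∈ S.Sol2 z ξ, ‖x‖ ≤ R := by
  obtain ⟨C, hC⟩ := hPsiUpper r
  obtain ⟨R, hR⟩ := exists_forall_le_of_mul_rpow_le hp hβp hcF ρ S.cPsi (C + S.dPsi + S.dF)
  refine ⟨R, fun z hz ξ hzr hξρ x hx => hR ‖x‖ ?_⟩
  have hPsi0 : S.Psi z 0 ≤ C :=
    hC z 0 hzr (norm_zero.trans_le ((norm_nonneg z).trans hzr))
  calc S.cF * ‖x‖ ^ S.p
      ≤ ‖S.load ξ‖ * ‖x‖ + S.cPsi * ‖x‖ ^ S.beta + (S.Psi z 0 + S.dPsi + S.dF) :=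
        mul_norm_rpow_le_of_mem_Sol2 hF hPsiLower hx (hLnonneg x hx.1.2) ⟨hM z hz, hLzero⟩
    _ ≤ ρ * ‖x‖ + S.cPsi * ‖x‖ ^ S.beta + (C + S.dPsi + S.dF) := by gcongr

theorem exists_norm_L_le_of_mem_Sol2 (hdense : Dense S.DL) (hLnonneg : ∀ x ∈ S.DL, 0 ≤ S.L x x)
    (hM : (0 : X) ∈ interior (⋂ w ∈ S.K, S.M w))
    (hF : ∀ B : Set X, IsBounded B → IsBounded (S.F '' B)) (hcPsi : 0 ≤ S.cPsi)
    (hβ : 0 ≤ S.beta) (hPsiLower : S.PsiLowerGrowth) (hPsiUpper : S.PsiBoundedAbove) (r ρ R : ℝ) :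
    ∃ R' : ℝ, ∀ z ∈ S.K, ∀ ξ : Y →L[ℝ] ℝ, ‖z‖ ≤ r → ‖S.load ξ‖ ≤ ρ →
      ∀ x ∈ S.Sol2 z ξ, ‖x‖ ≤ R → ‖S.L x‖ ≤ R' := by
  obtain ⟨δ, hδ, hball⟩ := exists_ball_subset_M hM
  obtain ⟨C, hC⟩ := hPsiUpper (max r δ)
  obtain ⟨CF, hCF⟩ := (hF _ (Metric.isBounded_closedBall (x := 0) (r := R))).exists_norm_le
  refine ⟨((CF + ρ) * (δ + R) + (C + S.cPsi * R ^ S.beta + S.dPsi)) / δ,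
    fun z hz ξ hzr hξρ x hx hxR => ?_⟩
  have hFx : ‖S.F x‖ ≤ CF := hCF _ ⟨x, by simpa using hxR, rfl⟩
  have hPsiC : ∀ y ∈ Metric.ball 0 δ, S.Psi z y ≤ C := fun y hy =>
    hC z y (le_max_of_le_left hzr) (le_max_of_le_right (mem_ball_zero_iff.1 hy).le)
  exact norm_L_le_of_mem_Sol2 hdense hPsiLower hcPsi hβ hδ (hball z hz) hPsiC hx
    (hLnonneg x hx.1.2) hxR ((norm_sub_le _ _).trans (add_le_add hFx hξρ))

end QVISetting

theorem statement3_general {X Y : Type*} [NormedAddCommGroup X] [NormedSpace ℝ X]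
    [NormedAddCommGroup Y] [NormedSpace ℝ Y] (S : QVISetting X Y)
    (hLzero : 0 ∈ S.DL) (hdense : Dense S.DL) (hLnonneg : ∀ x ∈ S.DL, 0 ≤ S.L x x)
    (hM : (0 : X) ∈ interior (⋂ w ∈ S.K, S.M w))
    (hFbdd : ∀ B : Set X, IsBounded B → IsBounded (S.F '' B))
    (hp : 1 < S.p) (hcF : 0 < S.cF) (hFcoer : S.CoerciveF)
    (hcPsi : 0 ≤ S.cPsi) (hβ : 0 ≤ S.beta) (hβp : S.beta < S.p)
    (hPsiLower : S.PsiLowerGrowth) (hPsiUpper : S.PsiBoundedAbove) (r : ℝ) :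
    ∃ R : ℝ, ∀ z ∈ S.K, ∀ ξ : Y →L[ℝ] ℝ, ‖z‖ + ‖ξ‖ ≤ r →
      ∀ x ∈ S.Sol2 z ξ, ‖x‖ + ‖S.L x‖ ≤ R := by
  have hM0 : ∀ z ∈ S.K, 0 ∈ S.M z := mem_iInter₂.1 (interior_subset hM)
  obtain ⟨R, hR⟩ := QVISetting.exists_norm_le_of_mem_Sol2 hLzero hLnonneg hM0 hp hcF hFcoer hβp
    hPsiLower hPsiUpper r (‖S.E‖ + r * ‖S.gam‖)
  obtain ⟨R', hR'⟩ := QVISetting.exists_norm_L_le_of_mem_Sol2 hdense hLnonneg hM hFbdd hcPsi hβ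
    hPsiLower hPsiUpper r (‖S.E‖ + r * ‖S.gam‖) R
  refine ⟨R + R', fun z hz ξ hzξ x hx => ?_⟩
  have hzr : ‖z‖ ≤ r := by linarith [norm_nonneg ξ]
  have hξr : ‖ξ‖ ≤ r := by linarith [norm_nonneg z]
  have hload : ‖S.load ξ‖ ≤ ‖S.E‖ + r * ‖S.gam‖ :=
    (QVISetting.norm_load_le ξ).trans (by gcongr)
  have hxR : ‖x‖ ≤ R := hR z hz ξ hzr hload x hx
  exact add_le_add hxR (hR' z hz ξ hzr hload x hx hxR)

/-- under the hypotheses of Statement 0 and strict monotonicity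
of `F` (so the solution map `Ssol` of Problem 2 is single-valued), `Ssol` maps
bounded subsets of `K × Y*` to bounded subsets of `W` (graph norm). -/
theorem statement3 {X Y : Type*} [NormedAddCommGroup X] [NormedSpace ℝ X]
    [NormedAddCommGroup Y] [NormedSpace ℝ Y] [CompleteSpace X] [CompleteSpace Y]
    [TopologicalSpace.SeparableSpace X] [TopologicalSpace.SeparableSpace Y]
    (hreflX : IsReflexiveSpace X) (hreflY : IsReflexiveSpace Y)
    (S : QVISetting X Y)
    (hK : S.HK) (hL : S.HL) (hM : S.HM) (hF : S.HF) (hG : S.HG)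
    (hgam : S.Hgam) (hPsi : S.HPsi)
    (hsmall : S.cG * ‖S.gam‖ ^ S.p < S.cF)
    (hstrict : S.StrictlyMonotoneF)
    (Ssol : X → (Y →L[ℝ] ℝ) → X)
    (hSsol : ∀ z ∈ S.K, ∀ ξ : Y →L[ℝ] ℝ, S.Sol2 z ξ = {Ssol z ξ}) :
    ∀ r : ℝ, ∃ R : ℝ, ∀ z ∈ S.K, ∀ ξ : Y →L[ℝ] ℝ, ‖z‖ + ‖ξ‖ ≤ r →
      ‖Ssol z ξ‖ + ‖S.L (Ssol z ξ)‖ ≤ R := by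
  intro r
  obtain ⟨hFbdd, -, -, hp, hcF, -, hFcoer⟩ := hF
  have hPsiUpper := hPsi.psiBoundedAbove
  obtain ⟨-, -, -, -, -, hcPsi, -, hβ, hβp, hPsiLower⟩ := hPsi
  obtain ⟨R, hR⟩ := statement3_general S hL.1 hL.2.2.1 (fun _ => hL.apply_self_nonneg) hM.2.1
    hFbdd hp hcF hFcoer hcPsi (zero_le_one.trans hβ) hβp hPsiLower hPsiUpper r
  exact ⟨R, fun z hz ξ hzξ => hR z hz ξ hzξ _ (hSsol z hz ξ ▸ mem_singleton _)⟩
end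
end
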